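/- arXiv:1002.2456 — 9 statements merged into one kernel-verified Lean document; each statement's English description precedes it below -/
import Mathlib

section
/- Let p be an odd prime and q an integer coprime to p, let t be the multiplicative order of q modulo p, and suppose p² does not divide q^t − 1. Then for every r ≥ 1 there exists a natural number k such that q^(k*t) ≡ 1 + p (mod p^r); equivalently, the unit (1 + p : ZMod p^r) lies in the cyclic subgroup of (ZMod p^r)ˣ generated by q. -/
/-!
The point is that `q ^ t` and `1 + p` generate the same subgroup of `(ZMod (p ^ r))ˣ`.
By the choice of `t`, `q ^ t = 1 + p * a` for an integer `a`, and the hypothesis on `p ^ 2` says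
that `p` does not divide `a`. For odd `p`, every `1 + p * a` with `p ∤ a` has order `p ^ (r - 1)`
modulo `p ^ r` (`ZMod.orderOf_one_add_mul_prime`); this applies to `1 + p` too.
Since `(ZMod (p ^ r))ˣ` is cyclic, it has only one subgroup of each order.
-/

/-- A finite cyclic group has at most `n` solutions of `x ^ n = 1`; when `x` has order `n`, its
powers are all of them. -/
theorem mem_powers_of_orderOf_eq {G : Type*} [Group G] [Finite G] [IsCyclic G] {x y : G}
    (h : orderOf y = orderOf x) : ∃ k : ℕ, x ^ k = y := by
  classical
  have := Fintype.ofFinite G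
  have hsub : (Finset.range (orderOf x)).image (x ^ ·) ⊆
      Finset.univ.filter (fun a : G => a ^ orderOf x = 1) := by
    intro a ha
    obtain ⟨k, -, rfl⟩ := Finset.mem_image.mp ha
    rw [Finset.mem_filter]
    exact ⟨Finset.mem_univ _, by rw [pow_right_comm, pow_orderOf_eq_one, one_pow]⟩
  have hcard : ((Finset.range (orderOf x)).image (x ^ ·)).card = orderOf x := by
    rw [Finset.card_image_of_injOn, Finset.card_range]
    rw [Finset.coe_range]
    exact pow_injOn_Iio_orderOf
  have heq := Finset.eq_of_subset_of_card_le hsub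
    ((IsCyclic.card_pow_eq_one_le (orderOf_pos x)).trans hcard.ge)
  have hy : y ∈ Finset.univ.filter (fun a : G => a ^ orderOf x = 1) := by
    simp [← h, pow_orderOf_eq_one]
  rw [← heq] at hy
  obtain ⟨k, -, hk⟩ := Finset.mem_image.mp hy
  exact ⟨k, hk⟩


/-- let `p` be an odd prime and `q` an integer coprime to `p`, let `t` be the
multiplicative order of `q` modulo `p`, and suppose `p²` does not divide `q^t − 1`.
Then for every `r ≥ 1` there is a natural number `k` with `q^(k*t) ≡ 1 + p (mod p^r)`;
equivalently, the unit `1 + p` of `ZMod (p^r)` lies in the cyclic subgroup generated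
by `q`. -/
theorem one_add_p_mem_powers
    (p : ℕ) (hp : p.Prime) (hodd : Odd p)
    (q : ℕ) (hq : Nat.Coprime q p)
    (t : ℕ) (ht : t = orderOf (ZMod.unitOfCoprime q hq : (ZMod p)ˣ))
    (hz : ¬ ((p : ℤ) ^ 2 ∣ (q : ℤ) ^ t - 1))
    (r : ℕ) (hr : 1 ≤ r) :
    ∃ k : ℕ, (q : ZMod (p ^ r)) ^ (k * t) = 1 + (p : ZMod (p ^ r)) := by
  have hp2 : p ≠ 2 := by rintro rfl; exact absurd hodd (by decide)
  obtain ⟨n, rfl⟩ := Nat.exists_eq_add_of_le' hr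
  have hdvd : (p : ℤ) ∣ (q : ℤ) ^ t - 1 := by
    rw [← ZMod.intCast_zmod_eq_zero_iff_dvd]
    have h := congrArg Units.val (pow_orderOf_eq_one (ZMod.unitOfCoprime q hq))
    rw [← ht, Units.val_pow_eq_pow_val, ZMod.coe_unitOfCoprime, Units.val_one] at h
    push_cast
    rw [h, sub_self]
  obtain ⟨a, ha⟩ := hdvd
  have hpa : ¬ (p : ℤ) ∣ a := fun h => hz (by rw [ha, sq]; exact mul_dvd_mul_left _ h)
  have hqt : (q : ZMod (p ^ (n + 1))) ^ t = 1 + p * a := by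
    have h := congrArg (Int.cast : ℤ → ZMod (p ^ (n + 1))) (eq_add_of_sub_eq' ha)
    push_cast at h
    exact h
  have := ZMod.isCyclic_units_of_prime_pow p hp hp2 (n + 1)
  have : NeZero (p ^ (n + 1)) := ⟨pow_ne_zero _ hp.ne_zero⟩
  have h1p : Nat.Coprime (1 + p) (p ^ (n + 1)) := Nat.Coprime.pow_right _ (by simp)
  let u := ZMod.unitOfCoprime q (hq.pow_right (n + 1))
  obtain ⟨k, hk⟩ := mem_powers_of_orderOf_eq (x := u ^ t) (y := ZMod.unitOfCoprime (1 + p) h1p) (by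
    rw [← orderOf_units, ← orderOf_units, Units.val_pow_eq_pow_val, ZMod.coe_unitOfCoprime,
      ZMod.coe_unitOfCoprime, hqt, ZMod.orderOf_one_add_mul_prime hp hp2 a hpa]
    push_cast
    exact ZMod.orderOf_one_add_prime hp hp2 n)
  refine ⟨k, ?_⟩
  have h := congrArg Units.val hk
  simp only [Units.val_pow_eq_pow_val, u, ZMod.coe_unitOfCoprime] at h
  rw [mul_comm, pow_mul, h]
  push_cast
  rfl
end

section
/- Let p be an odd prime and q a prime power with gcd(p,q)=1; let t be the multiplicative order of q modulo p and suppose p² does not divide q^t − 1 (z = 1). Then for every cyclic code C of length p^r over F_q, the multiplier permutation M_{p+1} : ZMod p^r → ZMod p^r, x ↦ (1+p)*x, belongs to Per(C). -/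
/-!
A cyclic code `C` is an ideal of the group algebra `F[ZMod n]`, and over a field of `q` elements
`f ^ q` is the image of `f` under the multiplier `M_q` (`pow_card_eq_mapDomain`). Hence `M_q` maps
`C` into itself, so `M_q ∈ Per C`, and the group of all `a` with `M_a ∈ Per C` contains the powers
of `q`.

For `n = p ^ r` with `p` odd and `r ≥ 1`, the group of units modulo `n` is cyclic. As `p` divides `q ^ t - 1`
exactly once, `q ^ t` has the same order `p ^ (r - 1)` as `1 + p`, so the two generate the same
subgroup and `1 + p` is a power of `q` (`one_add_prime_mem_zpowers`).
-/

open Pointwise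

section Preamble

variable {F : Type} [Field F] {n : ℕ}

instance codeSMul : SMul (Equiv.Perm (ZMod n)) (ZMod n → F) :=
  ⟨fun σ x => x ∘ σ.symm⟩

instance codeMulAction : MulAction (Equiv.Perm (ZMod n)) (ZMod n → F) where
  one_smul _ := rfl
  mul_smul _ _ _ := rfl

instance codeDistribMulAction : DistribMulAction (Equiv.Perm (ZMod n)) (ZMod n → F) where
  smul_zero _ := rfl
  smul_add _ _ _ := rfl

instance codeSMulCommClass : SMulCommClass (Equiv.Perm (ZMod n)) F (ZMod n → F) :=
  ⟨fun _ _ _ => rfl⟩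

/-- The permutation group `Per(C)` of a code `C`, i.e. `{σ | σ • C = C}`. -/
def Per (C : Submodule F (ZMod n → F)) : Subgroup (Equiv.Perm (ZMod n)) :=
  MulAction.stabilizer (Equiv.Perm (ZMod n)) C

/-- The shift permutation `T : i ↦ i + 1` of `ZMod n`. -/
def shiftT (n : ℕ) : Equiv.Perm (ZMod n) := Equiv.addRight 1

/-- For a unit `a` of `ZMod n`, the multiplier `M_a : x ↦ a * x`. -/
def multiplier {n : ℕ} (a : (ZMod n)ˣ) : Equiv.Perm (ZMod n) where
  toFun x := (a : ZMod n) * x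
  invFun x := ((a⁻¹ : (ZMod n)ˣ) : ZMod n) * x
  left_inv x := by simp
  right_inv x := by simp

theorem succ_coprime (p : ℕ) : Nat.Coprime (p + 1) p := by
  simp [Nat.Coprime, Nat.succ_sub_one, Nat.gcd_comm]

end Preamble

/-- The multipliers form a group: `a ↦ M_a` is a homomorphism. -/
def multiplierHom (n : ℕ) : (ZMod n)ˣ →* Equiv.Perm (ZMod n) :=
  MonoidHom.mk' multiplier fun a b => by
    ext x
    simp [multiplier, mul_assoc]

section Code

variable {F : Type} [Field F] {n : ℕ}

theorem smul_mem_of_mem_per {C : Submodule F (ZMod n → F)} {σ : Equiv.Perm (ZMod n)}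
    (hσ : σ ∈ Per C) {x : ZMod n → F} (hx : x ∈ C) : σ • x ∈ C := by
  have h : σ • C = C := hσ
  rw [← h]
  exact Submodule.smul_mem_pointwise_smul x σ C hx

/-- Since a code over a finite field is finite, a permutation mapping it into itself
stabilizes it. -/
theorem mem_per_of_forall_smul_mem [Finite F] [NeZero n] {C : Submodule F (ZMod n → F)}
    {σ : Equiv.Perm (ZMod n)} (h : ∀ x ∈ C, σ • x ∈ C) : σ ∈ Per C := by
  have hs : σ ∈ MulAction.stabilizer (Equiv.Perm (ZMod n)) (C : Set (ZMod n → F)) := by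
    rw [MulAction.mem_stabilizer_set_iff_smul_set_subset (Set.toFinite _)]
    rintro _ ⟨x, hx, rfl⟩
    exact h x hx
  have hs' : σ • (C : Set (ZMod n → F)) = C := hs
  change σ • C = C
  apply SetLike.coe_injective
  rw [Submodule.coe_pointwise_smul, hs']

theorem addRight_mem_per {C : Submodule F (ZMod n → F)} [NeZero n] (hC : shiftT n ∈ Per C)
    (a : ZMod n) : Equiv.addRight a ∈ Per C := by
  have h : ∀ k : ℕ, Equiv.addRight (k : ZMod n) = shiftT n ^ k := by
    intro k
    induction k with
    | zero => ext x; simp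
    | succ k ih => rw [pow_succ, ← ih]; ext x; simp [shiftT, add_assoc, add_comm (1 : ZMod n)]
  rw [← ZMod.natCast_zmod_val a, h]
  exact pow_mem hC _

/-- A cyclic code, seen as an ideal of the group algebra `F[ZMod n] ≅ F[X] / (X ^ n - 1)`. -/
noncomputable def codeIdeal [NeZero n] (C : Submodule F (ZMod n → F)) (hC : shiftT n ∈ Per C) :
    Ideal (AddMonoidAlgebra F (ZMod n)) where
  carrier := {x | (x.coeff : ZMod n → F) ∈ C}
  zero_mem' := by
    change (((0 : AddMonoidAlgebra F (ZMod n)).coeff : ZMod n →₀ F) : ZMod n → F) ∈ C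
    rw [AddMonoidAlgebra.coeff_zero, Finsupp.coe_zero]
    exact C.zero_mem
  add_mem' {x y} hx hy := by
    change ((x + y).coeff : ZMod n → F) ∈ C
    rw [AddMonoidAlgebra.coeff_add, Finsupp.coe_add]
    exact C.add_mem hx hy
  smul_mem' a x hx := by
    change ((a * x).coeff : ZMod n → F) ∈ C
    induction a using AddMonoidAlgebra.induction_linear with
    | zero =>
      rw [zero_mul, AddMonoidAlgebra.coeff_zero, Finsupp.coe_zero]
      exact C.zero_mem
    | add a b ha hb =>
      rw [add_mul, AddMonoidAlgebra.coeff_add, Finsupp.coe_add]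
      exact C.add_mem ha hb
    | single i c =>
      -- Multiplication by the monomial at `i` is the shift by `i`.
      have h := C.smul_mem c (smul_mem_of_mem_per (addRight_mem_per hC i) hx)
      convert! h using 1
      ext j
      rw [AddMonoidAlgebra.coeff_single_mul_apply, Pi.smul_apply, smul_eq_mul]
      congr 1
      change x.coeff (-i + j) = x.coeff ((Equiv.addRight i).symm j)
      simp [add_comm]

/-- In the group algebra over a field of `q` elements, the `q`-th power map substitutes
`X ^ q` for `X`. -/
theorem pow_card_eq_mapDomain [Fintype F] (x : AddMonoidAlgebra F (ZMod n)) :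
    x ^ Fintype.card F = AddMonoidAlgebra.mapDomain (fun i => (Fintype.card F : ZMod n) * i) x := by
  obtain ⟨ℓ, hℓ⟩ := CharP.exists F
  obtain ⟨k, hprime, hk⟩ := FiniteField.card F ℓ
  have : Fact ℓ.Prime := ⟨hprime⟩
  have : CharP (AddMonoidAlgebra F (ZMod n)) ℓ :=
    charP_of_injective_algebraMap (algebraMap F (AddMonoidAlgebra F (ZMod n))).injective ℓ
  induction x using AddMonoidAlgebra.induction_linear with
  | zero => simp [Fintype.card_ne_zero]
  | add a b ha hb =>
    rw [AddMonoidAlgebra.mapDomain_add, ← ha, ← hb, hk, add_pow_char_pow]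
  | single i c =>
    rw [AddMonoidAlgebra.single_pow, AddMonoidAlgebra.mapDomain_single, FiniteField.pow_card,
      nsmul_eq_mul]

/-- The multiplier `M_q` sends the codeword `f` to `f ^ q`, so it fixes every ideal. -/
theorem multiplier_card_mem_per [Fintype F] [NeZero n] {C : Submodule F (ZMod n → F)}
    (hC : shiftT n ∈ Per C) (u : (ZMod n)ˣ) (hu : (u : ZMod n) = Fintype.card F) :
    multiplier u ∈ Per C := by
  refine mem_per_of_forall_smul_mem fun x hx => ?_
  let f : AddMonoidAlgebra F (ZMod n) := .ofCoeff (Finsupp.equivFunOnFinite.symm x)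
  have hf : f ∈ codeIdeal C hC := by
    change ((Finsupp.equivFunOnFinite.symm x : ZMod n →₀ F) : ZMod n → F) ∈ C
    simpa using hx
  have hpow := (codeIdeal C hC).pow_mem_of_mem hf (Fintype.card F) Fintype.card_pos
  rw [pow_card_eq_mapDomain] at hpow
  have h : ((Finsupp.mapDomain (fun i => (Fintype.card F : ZMod n) * i) f.coeff : ZMod n →₀ F) :
      ZMod n → F) ∈ C := hpow
  convert! h using 1
  rw [← hu]
  ext j
  obtain ⟨i, rfl⟩ := (multiplier u).surjective j
  have hi : (multiplier u • x) (multiplier u i) = x i := by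
    change x ((multiplier u).symm (multiplier u i)) = x i
    rw [Equiv.symm_apply_apply]
  rw [hi]
  exact (Finsupp.mapDomain_apply (multiplier u).injective f.coeff i).symm

end Code

/-- A finite cyclic group has a single subgroup of each order. -/
theorem mem_zpowers_of_orderOf_eq {G : Type*} [Group G] [Finite G] [IsCyclic G] {g h : G}
    (e : orderOf h = orderOf g) : h ∈ Subgroup.zpowers g := by
  classical
  have := Fintype.ofFinite G
  have hsub : Finset.univ.filter (· ∈ Subgroup.zpowers g) ⊆
      Finset.univ.filter fun a : G => a ^ orderOf g = 1 := by
    intro a ha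
    obtain ⟨k, rfl⟩ := Subgroup.mem_zpowers_iff.mp (Finset.mem_filter.mp ha).2
    refine Finset.mem_filter.mpr ⟨Finset.mem_univ _, ?_⟩
    rw [← zpow_natCast, zpow_comm, zpow_natCast, pow_orderOf_eq_one, one_zpow]
  have hcard : (Finset.univ.filter (· ∈ Subgroup.zpowers g)).card = orderOf g := by
    rw [← Fintype.card_zpowers, Fintype.card_subtype]
  have heq := Finset.eq_of_subset_of_card_le hsub
    ((IsCyclic.card_pow_eq_one_le (orderOf_pos g)).trans hcard.ge)
  have hh : h ∈ Finset.univ.filter fun a : G => a ^ orderOf g = 1 := by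
    simp [← e, pow_orderOf_eq_one]
  rw [← heq] at hh
  exact (Finset.mem_filter.mp hh).2

/-- If `p ∣ q ^ t - 1` but `p ^ 2 ∤ q ^ t - 1`, then `q ^ t` and `1 + p` both have order `p ^ m`
modulo `p ^ (m + 1)`, so `1 + p` is a power of `q` there. -/
theorem one_add_prime_mem_zpowers {p : ℕ} (hp : p.Prime) (hp2 : p ≠ 2) {q t m : ℕ}
    (hdvd : (p : ℤ) ∣ (q : ℤ) ^ t - 1) (hz : ¬ (p : ℤ) ^ 2 ∣ (q : ℤ) ^ t - 1)
    {u v : (ZMod (p ^ (m + 1)))ˣ} (hu : (u : ZMod (p ^ (m + 1))) = q)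
    (hv : (v : ZMod (p ^ (m + 1))) = 1 + p) : v ∈ Subgroup.zpowers u := by
  have : NeZero (p ^ (m + 1)) := ⟨pow_ne_zero _ hp.ne_zero⟩
  have := ZMod.isCyclic_units_of_prime_pow p hp hp2 (m + 1)
  obtain ⟨a, ha⟩ := hdvd
  have hpa : ¬ (p : ℤ) ∣ a := by
    rintro ⟨b, rfl⟩
    exact hz ⟨b, by rw [ha]; ring⟩
  have hut : ((u ^ t : (ZMod (p ^ (m + 1)))ˣ) : ZMod (p ^ (m + 1))) = 1 + p * a := by
    have h := congrArg (Int.cast : ℤ → ZMod (p ^ (m + 1))) ha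
    push_cast at h
    rw [Units.val_pow_eq_pow_val, hu, ← h]
    ring
  have hord : orderOf v = orderOf (u ^ t) := by
    rw [← orderOf_units, ← orderOf_units, hut, hv, ZMod.orderOf_one_add_prime hp hp2,
      ZMod.orderOf_one_add_mul_prime hp hp2 a hpa]
  exact Subgroup.zpowers_le.mpr (Subgroup.npow_mem_zpowers u t) (mem_zpowers_of_orderOf_eq hord)

/-- let `p` be an odd prime and `q` a prime power with `gcd(p,q) = 1`; let `t`
be the multiplicative order of `q` modulo `p` and suppose `p²` does not divide `q^t − 1`
(`z = 1`). Then for every cyclic code `C` of length `p^r` over `F_q`, the multiplier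
`M_{p+1} : x ↦ (1+p) * x` lies in `Per(C)`. -/
theorem multiplier_one_add_p_mem_per
    (p : ℕ) (hp : p.Prime) (hodd : Odd p) (r : ℕ)
    (q : ℕ) (hq : IsPrimePow q) (hpq : Nat.Coprime p q)
    (t : ℕ) (ht : t = orderOf (ZMod.unitOfCoprime q hpq.symm : (ZMod p)ˣ))
    (hz : ¬ ((p : ℤ) ^ 2 ∣ (q : ℤ) ^ t - 1))
    (F : Type) [Field F] [Fintype F] (hF : Fintype.card F = q)
    (C : Submodule F (ZMod (p ^ r) → F)) (hC : shiftT (p ^ r) ∈ Per C) :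
    multiplier (ZMod.unitOfCoprime (p + 1) ((succ_coprime p).pow_right r)) ∈ Per C := by
  have hp2 : p ≠ 2 := by rintro rfl; exact absurd hodd (by decide)
  have hn : NeZero (p ^ r) := ⟨pow_ne_zero _ hp.ne_zero⟩
  obtain _ | m := r
  · -- In length `p ^ 0 = 1` there is only the identity permutation.
    have : Subsingleton (ZMod (p ^ 0)) := by rw [pow_zero]; infer_instance
    rw [Subsingleton.elim (multiplier _) 1]
    exact one_mem _
  have hdvd : (p : ℤ) ∣ (q : ℤ) ^ t - 1 := by
    rw [← ZMod.intCast_zmod_eq_zero_iff_dvd _ p]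
    have h := congrArg (Units.val) (pow_orderOf_eq_one (ZMod.unitOfCoprime q hpq.symm : (ZMod p)ˣ))
    rw [← ht, Units.val_pow_eq_pow_val, ZMod.coe_unitOfCoprime, Units.val_one] at h
    push_cast
    rw [h, sub_self]
  let u : (ZMod (p ^ (m + 1)))ˣ := ZMod.unitOfCoprime q (hpq.symm.pow_right (m + 1))
  have hu : u ∈ (Per C).comap (multiplierHom (p ^ (m + 1))) :=
    multiplier_card_mem_per hC u (by rw [hF]; exact ZMod.coe_unitOfCoprime _ _)
  refine Subgroup.zpowers_le.mpr hu (one_add_prime_mem_zpowers hp hp2 hdvd hz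
    (ZMod.coe_unitOfCoprime _ _) ?_)
  rw [ZMod.coe_unitOfCoprime]
  push_cast
  ring
end

section
/- Let p be an odd prime, r > 1, and q a prime power with gcd(p,q)=1; let t be the multiplicative order of q modulo p and suppose p² does not divide q^t − 1 (z = 1). Then for every cyclic code C of length p^r over F_q, p^(2r−1) divides the cardinality of Per(C); consequently every Sylow p-subgroup of Per(C) has order p^s with 2r−1 ≤ s ≤ (p^r − 1)/(p − 1). -/
/-!
Identify `ZMod n → F` with the group algebra `A = F[ZMod n]`.  A cyclic code is an ideal of `A`,
so it is closed under `c ↦ c ^ q`.  When `q = |F|`, the `q`-th power map is `F`-linear on `A` and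
sends the basis element `[i]` to `[q i]`; hence it is the multiplier permutation `i ↦ q i`, which
therefore lies in `Per C` as soon as `q` is invertible modulo `n`
(`mulPerm_mem_per`).

For `n = p ^ r`, write `q ^ t = 1 + p a`.  The hypothesis on `q ^ t - 1` says that `p ∤ a`, so
`q ^ t` has order `p ^ (r - 1)` modulo `p ^ r` (`orderOf_unit_pow`).  Thus the stabilizer of `0` in
`Per C` has order divisible by `p ^ (r - 1)`.  The shift makes `Per C` transitive, so this
stabilizer has index `p ^ r`, and the product `p ^ (2 r - 1)` divides `|Per C|`.  The upper bound is
Legendre's formula for the exponent of `p` in `|Perm (ZMod (p ^ r))| = (p ^ r)!`.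
-/

open Pointwise

/-- The multiplier permutation `i ↦ u i` of `ZMod n` attached to a unit `u`. -/
def mulPerm (n : ℕ) : (ZMod n)ˣ →* Equiv.Perm (ZMod n) :=
  MulAction.toPermHom (ZMod n)ˣ (ZMod n)

lemma mulPerm_injective (n : ℕ) : Function.Injective (mulPerm n) :=
  MulAction.toPerm_injective

lemma comp_symm_mem_of_mem_per {F : Type} [Field F] {n : ℕ} {C : Submodule F (ZMod n → F)}
    {σ : Equiv.Perm (ZMod n)} (h : σ ∈ Per C) {x : ZMod n → F} (hx : x ∈ C) :
    x ∘ σ.symm ∈ C := by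
  have h1 : σ • C = C := h
  have h2 : σ • x ∈ σ • C := Submodule.smul_mem_pointwise_smul x σ C hx
  rw [h1] at h2
  exact h2

/-- Over a finite field it is enough to check the inclusion `σ • C ⊆ C`, as `C` is finite. -/
lemma mem_per_of_forall {F : Type} [Field F] [Finite F] {n : ℕ} [NeZero n]
    {C : Submodule F (ZMod n → F)} {σ : Equiv.Perm (ZMod n)}
    (h : ∀ x ∈ C, x ∘ σ.symm ∈ C) : σ ∈ Per C := by
  have hs : σ ∈ MulAction.stabilizer (Equiv.Perm (ZMod n)) (C : Set (ZMod n → F)) := by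
    rw [MulAction.mem_stabilizer_set_iff_smul_set_subset (Set.toFinite _)]
    rintro _ ⟨x, hx, rfl⟩
    exact h x hx
  have hs' : σ • (C : Set (ZMod n → F)) = C := hs
  change σ • C = C
  apply SetLike.coe_injective
  rw [Submodule.coe_pointwise_smul]
  exact hs'

lemma shift_pow_symm_apply (n k : ℕ) (i : ZMod n) : ((shiftT n) ^ k).symm i = i - k := by
  rw [Equiv.symm_apply_eq]
  induction k with
  | zero => simp
  | succ k ih =>
    rw [pow_succ, Equiv.Perm.mul_apply]
    convert ih using 2
    simp [shiftT]
    ring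

/-- A cyclic code, viewed inside the group algebra of `ZMod n`, absorbs multiplication. -/
lemma coeff_mul_mem {F : Type} [Field F] {n : ℕ} [NeZero n] {C : Submodule F (ZMod n → F)}
    (hC : shiftT n ∈ Per C) (a c : AddMonoidAlgebra F (ZMod n)) (hc : ⇑c.coeff ∈ C) :
    ⇑(a * c).coeff ∈ C := by
  induction a using AddMonoidAlgebra.induction_linear with
  | zero => simp
  | add x y hx hy =>
    have := C.add_mem hx hy
    rw [add_mul]
    simpa using this
  | single k b =>
    have h := C.smul_mem b (comp_symm_mem_of_mem_per ((Per C).pow_mem hC k.val) hc)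
    convert h using 1
    funext i
    rw [AddMonoidAlgebra.coeff_single_mul_apply]
    simp [shift_pow_symm_apply, sub_eq_neg_add]

/-- In the group algebra over `F`, raising to the power `|F|` permutes coordinates by `i ↦ |F| i`:
both are `F`-algebra maps agreeing on the basis of group elements. -/
lemma domCongr_eq_pow {F : Type} [Field F] [Fintype F] {n : ℕ} (u : (ZMod n)ˣ)
    (hu : (u : ZMod n) = (Fintype.card F : ℕ)) (c : AddMonoidAlgebra F (ZMod n)) :
    AddMonoidAlgebra.domCongr F F (DistribMulAction.toAddEquiv (ZMod n) u) c = c ^ Fintype.card F := by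
  have h : (AddMonoidAlgebra.domCongr F F (DistribMulAction.toAddEquiv (ZMod n) u)).toAlgHom =
      FiniteField.frobeniusAlgHom F (AddMonoidAlgebra F (ZMod n)) := by
    apply AddMonoidAlgebra.algHom_ext
    · intro m
      simp [AddMonoidAlgebra.single_pow, AddMonoidAlgebra.domCongr, Units.smul_def, hu]
    · ext
  exact congrArg (fun f => f c) h

/-- The multiplier `i ↦ |F| i` preserves every cyclic code over `F`. -/
lemma mulPerm_mem_per {F : Type} [Field F] [Fintype F] {n : ℕ} [NeZero n]
    {C : Submodule F (ZMod n → F)} (hC : shiftT n ∈ Per C) (u : (ZMod n)ˣ)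
    (hu : (u : ZMod n) = (Fintype.card F : ℕ)) : mulPerm n u ∈ Per C := by
  apply mem_per_of_forall
  intro x hx
  let c : AddMonoidAlgebra F (ZMod n) := .ofCoeff (Finsupp.equivFunOnFinite.symm x)
  have hc : ⇑c.coeff = x := by simp [c]
  have h := coeff_mul_mem hC (c ^ (Fintype.card F - 1)) c (by rwa [hc])
  rw [← pow_succ, Nat.sub_add_cancel Fintype.card_pos, ← domCongr_eq_pow u hu] at h
  convert h using 1
  funext i
  rw [AddMonoidAlgebra.coeff_domCongr, hc]
  rfl

lemma orderOf_unit_pow {p : ℕ} (hp : p.Prime) (hodd : Odd p) {r : ℕ} (hr : 1 < r)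
    {q : ℕ} (hpq : Nat.Coprime p q) {t : ℕ}
    (ht : t = orderOf (ZMod.unitOfCoprime q hpq.symm : (ZMod p)ˣ))
    (hz : ¬ ((p : ℤ) ^ 2 ∣ (q : ℤ) ^ t - 1)) (u : (ZMod (p ^ r))ˣ)
    (hu : (u : ZMod (p ^ r)) = (q : ℕ)) : orderOf (u ^ t) = p ^ (r - 1) := by
  have h1 : (p : ℤ) ∣ (q : ℤ) ^ t - 1 := by
    rw [← ZMod.intCast_zmod_eq_zero_iff_dvd]
    have := congrArg Units.val (pow_orderOf_eq_one (ZMod.unitOfCoprime q hpq.symm : (ZMod p)ˣ))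
    rw [← ht] at this
    simp only [Units.val_pow_eq_pow_val, ZMod.coe_unitOfCoprime, Units.val_one] at this
    push_cast
    rw [this, sub_self]
  obtain ⟨a, ha⟩ := h1
  have hpa : ¬ (p : ℤ) ∣ a := by
    rintro ⟨b, rfl⟩
    exact hz ⟨b, by rw [ha]; ring⟩
  have hp2 : p ≠ 2 := by
    rintro rfl
    exact absurd hodd (by decide)
  obtain ⟨m, rfl⟩ : ∃ m, r = m + 1 := ⟨r - 1, by omega⟩
  rw [Nat.add_sub_cancel, ← ZMod.orderOf_one_add_mul_prime hp hp2 a hpa m, ← orderOf_units]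
  congr 1
  have h2 : (q : ℤ) ^ t = 1 + p * a := by linarith
  have h3 := congrArg (fun z : ℤ => (z : ZMod (p ^ (m + 1)))) h2
  push_cast at h3
  rw [Units.val_pow_eq_pow_val, hu]
  exact h3

/-- let `p` be an odd prime, `r > 1`, and `q` a prime power with
`gcd(p,q) = 1`; let `t` be the multiplicative order of `q` modulo `p` and suppose `p²`
does not divide `q^t − 1` (`z = 1`).  Then for every cyclic code `C` of length `p^r` over
`F_q`, `p^(2r−1)` divides `|Per(C)|`; consequently every Sylow `p`-subgroup of `Per(C)`
has order `p^s` with `2r−1 ≤ s ≤ 1 + p + ⋯ + p^(r−1)`. -/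
theorem pow_dvd_card_per_and_sylow_card_bounds
    (p : ℕ) (hp : p.Prime) (hodd : Odd p) (r : ℕ) (hr : 1 < r)
    (q : ℕ) (hq : IsPrimePow q) (hpq : Nat.Coprime p q)
    (t : ℕ) (ht : t = orderOf (ZMod.unitOfCoprime q hpq.symm : (ZMod p)ˣ))
    (hz : ¬ ((p : ℤ) ^ 2 ∣ (q : ℤ) ^ t - 1))
    (F : Type) [Field F] [Fintype F] (hF : Fintype.card F = q)
    (C : Submodule F (ZMod (p ^ r) → F)) (hC : shiftT (p ^ r) ∈ Per C) :
    p ^ (2 * r - 1) ∣ Nat.card ↥(Per C) ∧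
      ∀ P : Sylow p ↥(Per C), ∃ s : ℕ, Nat.card ↥(P : Subgroup ↥(Per C)) = p ^ s ∧
        2 * r - 1 ≤ s ∧ s ≤ ∑ i ∈ Finset.range r, p ^ i := by
  have : Fact p.Prime := ⟨hp⟩
  have hn : p ^ r ≠ 0 := pow_ne_zero _ hp.ne_zero
  have : NeZero (p ^ r) := ⟨hn⟩
  have main : p ^ (2 * r - 1) ∣ Nat.card ↥(Per C) := by
    let u : (ZMod (p ^ r))ˣ := ZMod.unitOfCoprime q (hpq.symm.pow_right r)
    have hu : (u : ZMod (p ^ r)) = (q : ℕ) := ZMod.coe_unitOfCoprime _ _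
    have hmem : mulPerm (p ^ r) (u ^ t) ∈ Per C := by
      rw [map_pow]
      exact (Per C).pow_mem (mulPerm_mem_per hC u (by rw [hF, hu])) t
    have htrans : MulAction.IsPretransitive ↥(Per C) (ZMod (p ^ r)) := by
      rw [MulAction.isPretransitive_iff_base (0 : ZMod (p ^ r))]
      intro i
      refine ⟨⟨shiftT (p ^ r) ^ i.val, (Per C).pow_mem hC _⟩, ?_⟩
      change (shiftT (p ^ r) ^ i.val) 0 = i
      rw [← Equiv.eq_symm_apply, shift_pow_symm_apply]
      simp
    let S := MulAction.stabilizer ↥(Per C) (0 : ZMod (p ^ r))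
    have hidx : S.index = p ^ r := by
      rw [MulAction.index_stabilizer_of_transitive, Nat.card_zmod]
    have hstab : (⟨mulPerm (p ^ r) (u ^ t), hmem⟩ : ↥(Per C)) ∈ S := by
      change (u ^ t) • (0 : ZMod (p ^ r)) = 0
      simp
    have hS : p ^ (r - 1) ∣ Nat.card S := by
      have h := orderOf_dvd_natCard (⟨_, hstab⟩ : S)
      rwa [Subgroup.orderOf_mk, Subgroup.orderOf_mk, orderOf_injective _ (mulPerm_injective _),
        orderOf_unit_pow hp hodd hr hpq ht hz u hu] at h
    have h := mul_dvd_mul hS (dvd_refl (p ^ r))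
    rw [← pow_add] at h
    rw [← S.card_mul_index, hidx, show 2 * r - 1 = r - 1 + r by omega]
    exact h
  refine ⟨main, fun P => ⟨_, P.card_eq_multiplicity, ?_, ?_⟩⟩
  · exact (hp.pow_dvd_iff_le_factorization Nat.card_pos.ne').1 main
  · have h1 : Nat.card ↥(Per C) ∣ (p ^ r).factorial := by
      have h := (Per C).card_subgroup_dvd_card
      rwa [Nat.card_perm, Nat.card_zmod] at h
    have h2 := (Nat.ordProj_dvd (Nat.card ↥(Per C)) p).trans h1
    rw [← Nat.Prime.multiplicity_factorial_pow hp (n := r)]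
    exact (Nat.finiteMultiplicity_iff.2
      ⟨hp.ne_one, Nat.factorial_pos _⟩).le_multiplicity_of_pow_dvd h2
end

section
/- Let p be an odd prime, q a prime power, and C a cyclic code of length p^r over F_q. Suppose the cyclic subgroup ⟨T⟩ generated by the shift T is itself a Sylow p-subgroup of Per(C) (i.e. the Sylow p-subgroup containing T has order p^r). Then H(⟨T⟩) equals the affine group AG(p^r), i.e. the set of permutations x ↦ a*x + b of ZMod p^r with a a unit. -/
/-!
Here `P = ⟨T⟩`, so the claim concerns permutations conjugating `T` into `⟨T⟩`. The condition `σ⁻¹ * T * σ = T ^ k` says that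
`τ = σ⁻¹` satisfies `τ (y + 1) = τ y + k`, hence `τ y = k * y + τ 0`; surjectivity of `τ`
makes `k` a unit, so that `τ`, and with it `σ`, is affine. Conversely, if `σ x = a * x + b` then
`σ⁻¹ * T * σ` is translation by `a⁻¹`, a power of `T` because `1` generates `ZMod n`.
-/

open Pointwise

/-- The affine group `AG(n)`, as the set of permutations `x ↦ a*x + b` of `ZMod n`
with `a` a unit of `ZMod n` and `b ∈ ZMod n`. -/
def AG (n : ℕ) : Set (Equiv.Perm (ZMod n)) :=
  {σ | ∃ a : (ZMod n)ˣ, ∃ b : ZMod n, ∀ x : ZMod n, σ x = (a : ZMod n) * x + b}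

lemma shiftT_zpow_apply (n : ℕ) (k : ℤ) (x : ZMod n) : (shiftT n ^ k) x = x + k := by
  induction k generalizing x with
  | zero => simp
  | succ m ih => rw [zpow_add_one, Equiv.Perm.mul_apply, ih]; simp [shiftT]; ring
  | pred m ih =>
    have h : (shiftT n)⁻¹ x = x - 1 := by
      rw [Equiv.Perm.inv_eq_iff_eq]; simp [shiftT]
    rw [zpow_sub_one, Equiv.Perm.mul_apply, h, ih]; push_cast; ring

lemma apply_eq_of_apply_add_one {n : ℕ} [NeZero n] {τ : ZMod n → ZMod n} {k : ZMod n}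
    (h : ∀ y, τ (y + 1) = τ y + k) (y : ZMod n) : τ y = k * y + τ 0 := by
  have key : ∀ m : ℕ, τ m = k * m + τ 0 := by
    intro m
    induction m with
    | zero => simp
    | succ m ih => rw [Nat.cast_succ, h, ih]; ring
  simpa using key y.val

/-- The permutations conjugating the shift into `⟨T⟩` are the affine ones, for any length `n ≠ 0`. -/
lemma inv_mul_shiftT_mul_mem_zpowers_iff {n : ℕ} [NeZero n] (σ : Equiv.Perm (ZMod n)) :
    σ⁻¹ * shiftT n * σ ∈ Subgroup.zpowers (shiftT n) ↔ σ ∈ AG n := by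
  have shift_apply : ∀ x, shiftT n x = x + 1 := fun _ => rfl
  constructor
  · rintro ⟨k, hk⟩
    have hk' : shiftT n * σ = σ * shiftT n ^ k := by
      simp only at hk
      rw [hk]; group
    have h1 : ∀ x, σ x + 1 = σ (x + k) := fun x => by
      simpa [shiftT_zpow_apply, shift_apply] using DFunLike.congr_fun hk' x
    have h2 : ∀ y, σ.symm (y + 1) = σ.symm y + k := fun y => by
      rw [Equiv.symm_apply_eq, ← h1, Equiv.apply_symm_apply]
    have h3 := apply_eq_of_apply_add_one h2
    have hu : (k : ZMod n) * σ (1 + σ.symm 0) = 1 := by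
      have := h3 (σ (1 + σ.symm 0))
      rw [Equiv.symm_apply_apply] at this
      exact (add_right_cancel this).symm
    refine ⟨⟨σ (1 + σ.symm 0), k, by rw [mul_comm]; exact hu, hu⟩,
      -(σ (1 + σ.symm 0) * σ.symm 0), fun x => ?_⟩
    have h4 := h3 (σ x)
    rw [Equiv.symm_apply_apply] at h4
    linear_combination (-σ (1 + σ.symm 0)) * h4 - σ x * hu
  · rintro ⟨a, b, h⟩
    refine ⟨(((a⁻¹ : (ZMod n)ˣ) : ZMod n).val : ℤ), ?_⟩
    simp only
    rw [mul_assoc, eq_inv_mul_iff_mul_eq]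
    ext1 x
    simp [shiftT_zpow_apply, shift_apply, h, mul_add]
    ring

/-- let `p` be an odd prime, `q` a prime power, `C` a cyclic code of length
`p^r` over `F_q`, and suppose the subgroup `⟨T⟩` generated by the shift is itself a Sylow
`p`-subgroup of `Per(C)`.  Then `H(⟨T⟩) = {σ | σ⁻¹ * T * σ ∈ ⟨T⟩}` is the affine group
`AG(p^r)`. -/
theorem HP_eq_affineGroup_of_sylow_eq_zpowers
    (p : ℕ) (hp : p.Prime) (hodd : Odd p) (r : ℕ)
    (q : ℕ) (hq : IsPrimePow q)
    (F : Type) [Field F] [Fintype F] (hF : Fintype.card F = q)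
    (C : Submodule F (ZMod (p ^ r) → F)) (hC : shiftT (p ^ r) ∈ Per C)
    (P : Sylow p ↥(Per C))
    (hP : (P : Subgroup ↥(Per C)).map (Per C).subtype = Subgroup.zpowers (shiftT (p ^ r))) :
    {σ : Equiv.Perm (ZMod (p ^ r)) |
        σ⁻¹ * shiftT (p ^ r) * σ ∈ (P : Subgroup ↥(Per C)).map (Per C).subtype} =
      AG (p ^ r) := by
  have : NeZero (p ^ r) := ⟨pow_ne_zero r hp.ne_zero⟩
  ext σ
  rw [Set.mem_ofPred_eq, hP]
  exact inv_mul_shiftT_mul_mem_zpowers_iff σ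
end

section
/- Let p be an odd prime, r ≥ 1, and q a prime power with gcd(p,q)=1; let t be the multiplicative order of q modulo p and suppose p² does not divide q^t − 1 (z = 1). Let G_r be the subgroup of Equiv.Perm (ZMod p^r) consisting of all permutations of the form x ↦ q^j * x + c with j a natural number and c ∈ ZMod p^r. Then G_r has a unique Sylow p-subgroup; equivalently, every Sylow p-subgroup of G_r is normal in G_r, and it has order p^(2r−1). -/
/-- The order of a unit modulo `p` is prime to `p`, as it divides `p - 1`. -/
lemma coprime_orderOf_units_zmod {p : ℕ} (hp : p.Prime) (v : (ZMod p)ˣ) :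
    p.Coprime (orderOf v) := by
  have := Fact.mk hp
  have h1 : orderOf v ∣ p - 1 := orderOf_dvd_of_pow_eq_one (ZMod.units_pow_card_sub_one_eq_one p v)
  rw [hp.coprime_iff_not_dvd]
  intro h
  have h2 := Nat.le_of_dvd (Nat.sub_pos_of_lt hp.one_lt) (h.trans h1)
  have := hp.pos
  omega

/-- If `p` divides `q ^ t - 1` exactly once, `t` being the order of `q` modulo `p`, then the order
of `q` modulo `p ^ r` is as large as it can be. -/
lemma orderOf_unit_prime_pow {p : ℕ} (hp : p.Prime) (hodd : Odd p) {r : ℕ} (hr : 1 ≤ r)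
    {q : ℕ} (hpq : Nat.Coprime p q) {t : ℕ}
    (ht : t = orderOf (ZMod.unitOfCoprime q hpq.symm : (ZMod p)ˣ))
    (hz : ¬ ((p : ℤ) ^ 2 ∣ (q : ℤ) ^ t - 1)) (u : (ZMod (p ^ r))ˣ)
    (hu : (u : ZMod (p ^ r)) = q) :
    orderOf u = t * p ^ (r - 1) := by
  have := Fact.mk hp
  have hdvd : (p : ℤ) ∣ (q : ℤ) ^ t - 1 := by
    have h := pow_orderOf_eq_one (ZMod.unitOfCoprime q hpq.symm : (ZMod p)ˣ)
    rw [← ht] at h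
    have h' := congrArg (Units.val) h
    rw [← ZMod.intCast_zmod_eq_zero_iff_dvd _ p]
    push_cast at h' ⊢
    rw [ZMod.coe_unitOfCoprime] at h'
    rw [h', sub_self]
  obtain ⟨a, ha⟩ := hdvd
  have hpa : ¬ (p : ℤ) ∣ a := by
    rintro ⟨b, rfl⟩
    exact hz ⟨b, by rw [ha]; ring⟩
  have hp2 : p ≠ 2 := by rintro rfl; exact absurd hodd (by decide)
  obtain ⟨n, rfl⟩ : ∃ n, r = n + 1 := ⟨r - 1, by omega⟩
  have hut : orderOf (u ^ t) = p ^ n := by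
    rw [← ZMod.orderOf_one_add_mul_prime hp hp2 a hpa n, ← orderOf_units]
    congr 1
    have h := congrArg (Int.cast : ℤ → ZMod (p ^ (n + 1))) ha
    push_cast at h ⊢
    rw [hu, ← h]
    ring
  -- Reduction modulo `p` sends `u` to an element of order `t`.
  have htu : t ∣ orderOf u := by
    have h := orderOf_map_dvd (Units.map (ZMod.castHom (dvd_pow_self p n.succ_ne_zero)
      (ZMod p)).toMonoidHom) u
    have he : Units.map (ZMod.castHom (dvd_pow_self p n.succ_ne_zero) (ZMod p)).toMonoidHom u
        = ZMod.unitOfCoprime q hpq.symm := by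
      ext
      rw [Units.coe_map, hu]
      simp
    rwa [he, ← ht] at h
  have ht0 : t ≠ 0 := by
    rw [ht]; exact (orderOf_pos _).ne'
  rw [orderOf_pow_of_dvd ht0 htu] at hut
  rw [Nat.add_sub_cancel, ← hut, Nat.mul_div_cancel' htu]

/-- The linear part `σ 1 - σ 0` of an affine permutation, as a homomorphism to the units. That
every `σ ∈ G` is affine is encoded by the hypothesis `hG`, which recovers `σ` from its values at
`0` and `1`. -/
def linearPart {n : ℕ} (G : Subgroup (Equiv.Perm (ZMod n)))
    (hG : ∀ σ ∈ G, ∀ x, σ x = (σ 1 - σ 0) * x + σ 0) : G →* (ZMod n)ˣ :=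
  MonoidHom.toHomUnits
    { toFun := fun σ => σ.1 1 - σ.1 0
      map_one' := by simp
      map_mul' := fun σ τ => by
        change σ.1 (τ.1 1) - σ.1 (τ.1 0) = _
        rw [hG σ.1 σ.2 (τ.1 1), hG σ.1 σ.2 (τ.1 0)]
        ring }

lemma coe_linearPart {n : ℕ} (G : Subgroup (Equiv.Perm (ZMod n)))
    (hG : ∀ σ ∈ G, ∀ x, σ x = (σ 1 - σ 0) * x + σ 0) (σ : G) :
    (linearPart G hG σ : ZMod n) = σ.1 1 - σ.1 0 := rfl

lemma apply_of_mem_ker_linearPart {n : ℕ} (G : Subgroup (Equiv.Perm (ZMod n)))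
    (hG : ∀ σ ∈ G, ∀ x, σ x = (σ 1 - σ 0) * x + σ 0) {σ : G}
    (hσ : linearPart G hG σ = 1) (x : ZMod n) : σ.1 x = x + σ.1 0 := by
  have h := congrArg Units.val hσ
  rw [coe_linearPart, Units.val_one] at h
  rw [hG σ.1 σ.2 x, h, one_mul]

lemma card_ker_linearPart {n : ℕ} (G : Subgroup (Equiv.Perm (ZMod n)))
    (hG : ∀ σ ∈ G, ∀ x, σ x = (σ 1 - σ 0) * x + σ 0)
    (htr : ∀ c : ZMod n, Equiv.addRight c ∈ G) :
    Nat.card (linearPart G hG).ker = n := by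
  have hb : Function.Bijective (fun σ : (linearPart G hG).ker => σ.1.1 0) := by
    constructor
    · intro σ τ h
      ext x
      rw [apply_of_mem_ker_linearPart G hG σ.2, apply_of_mem_ker_linearPart G hG τ.2]
      exact congrArg (x + ·) h
    · intro c
      refine ⟨⟨⟨Equiv.addRight c, htr c⟩, ?_⟩, by simp⟩
      rw [MonoidHom.mem_ker]
      ext
      rw [coe_linearPart]
      simp
  rw [Nat.card_congr (Equiv.ofBijective _ hb), Nat.card_zmod]

/-- An element of `G` with trivial linear part is a translation `x ↦ x + c`, so its order
divides `n`. -/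
lemma pow_eq_one_of_linearPart_eq_one {n : ℕ} (G : Subgroup (Equiv.Perm (ZMod n)))
    (hG : ∀ σ ∈ G, ∀ x, σ x = (σ 1 - σ 0) * x + σ 0) {σ : G}
    (hσ : linearPart G hG σ = 1) : σ ^ n = 1 := by
  have h : ∀ (k : ℕ) (x : ZMod n), (σ.1 ^ k) x = x + k * σ.1 0 := by
    intro k
    induction k with
    | zero => simp
    | succ k ih =>
      intro x
      rw [pow_succ', Equiv.Perm.mul_apply, ih, apply_of_mem_ker_linearPart G hG hσ]
      push_cast
      ring
  ext x
  rw [Subgroup.coe_pow, h]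
  simp

/-- let `p` be an odd prime, `r ≥ 1`, `q` a prime power coprime to `p`, `t`
the multiplicative order of `q` modulo `p`, and suppose `p²` does not divide `q^t − 1`
(`z = 1`).  Let `G_r` be the subgroup of `Equiv.Perm (ZMod (p^r))` of the generalized
affine permutations `x ↦ q^j * x + c`.  Then `G_r` has a unique Sylow `p`-subgroup;
equivalently, every Sylow `p`-subgroup of `G_r` is normal in `G_r`, and it has order
`p^(2r−1)`. -/
theorem sylow_of_Gr_unique_normal
    (p : ℕ) (hp : p.Prime) (hodd : Odd p) (r : ℕ) (hr : 1 ≤ r)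
    (q : ℕ) (hq : IsPrimePow q) (hpq : Nat.Coprime p q)
    (t : ℕ) (ht : t = orderOf (ZMod.unitOfCoprime q hpq.symm : (ZMod p)ˣ))
    (hz : ¬ ((p : ℤ) ^ 2 ∣ (q : ℤ) ^ t - 1))
    (G : Subgroup (Equiv.Perm (ZMod (p ^ r))))
    (hG : (G : Set (Equiv.Perm (ZMod (p ^ r)))) =
      {σ | ∃ j : ℕ, ∃ c : ZMod (p ^ r),
        ∀ x : ZMod (p ^ r), σ x = (q : ZMod (p ^ r)) ^ j * x + c}) :
    (∀ P P' : Sylow p ↥G, P = P') ∧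
      ∀ P : Sylow p ↥G, (P : Subgroup ↥G).Normal ∧
        Nat.card ↥(P : Subgroup ↥G) = p ^ (2 * r - 1) := by
  have := Fact.mk hp
  have : NeZero (p ^ r) := ⟨pow_ne_zero _ hp.ne_zero⟩
  have hmem : ∀ σ, σ ∈ G ↔ ∃ j : ℕ, ∃ c : ZMod (p ^ r),
      ∀ x : ZMod (p ^ r), σ x = (q : ZMod (p ^ r)) ^ j * x + c := fun σ => by
    rw [← SetLike.mem_coe, hG]; rfl
  have hlin : ∀ σ ∈ G, ∀ x, σ x = (σ 1 - σ 0) * x + σ 0 := by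
    intro σ hσ x
    obtain ⟨j, c, h⟩ := (hmem σ).1 hσ
    rw [h x, h 1, h 0]
    ring
  have htr : ∀ c, Equiv.addRight c ∈ G := fun c => (hmem _).2 ⟨0, c, fun x => by simp⟩
  let u : (ZMod (p ^ r))ˣ := ZMod.unitOfCoprime q (hpq.symm.pow_right r)
  have hu : (u : ZMod (p ^ r)) = q := ZMod.coe_unitOfCoprime q _
  have hord := orderOf_unit_prime_pow hp hodd hr hpq ht hz u hu
  have hcop : p.Coprime t := ht ▸ coprime_orderOf_units_zmod hp _
  have hrange : (linearPart G hlin).range = Subgroup.zpowers u := by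
    apply le_antisymm
    · rintro _ ⟨σ, rfl⟩
      obtain ⟨j, c, h⟩ := (hmem σ.1).1 σ.2
      refine ⟨j, ?_⟩
      ext
      rw [coe_linearPart, h 1, h 0]
      simp [hu]
    · rw [Subgroup.zpowers_le]
      refine ⟨⟨Units.mulLeft u, (hmem _).2 ⟨1, 0, fun x => by simp [hu]⟩⟩, ?_⟩
      ext
      rw [coe_linearPart]
      simp
  have hcardG : Nat.card G = p ^ (2 * r - 1) * t := by
    rw [← Subgroup.card_mul_index (linearPart G hlin).ker, Subgroup.index_ker, hrange,
      card_ker_linearPart G hlin htr, Nat.card_zpowers, hord, mul_left_comm, ← pow_add, mul_comm]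
    congr 2
    omega
  let ψ : G →* (ZMod (p ^ r))ˣ := (powMonoidHom (p ^ (r - 1))).comp (linearPart G hlin)
  have hindex : ψ.ker.index = t := by
    rw [Subgroup.index_ker, MonoidHom.range_comp, hrange, MonoidHom.map_zpowers, Nat.card_zpowers,
      powMonoidHom_apply, orderOf_pow_of_dvd (pow_ne_zero _ hp.ne_zero)
        (hord ▸ dvd_mul_left _ _), hord, Nat.mul_div_cancel _ (pow_pos hp.pos _)]
  have hker : IsPGroup p ψ.ker := by
    rintro ⟨σ, hσ⟩
    refine ⟨(r - 1) + r, ?_⟩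
    have h1 : linearPart G hlin (σ ^ p ^ (r - 1)) = 1 := by
      rw [map_pow]; exact hσ
    have h2 := pow_eq_one_of_linearPart_eq_one G hlin h1
    ext1
    rw [Subgroup.coe_pow, pow_add, pow_mul]
    exact h2
  have ht0 : 0 < t := by
    rw [ht]; exact orderOf_pos _
  have hcardK : Nat.card ψ.ker = p ^ (2 * r - 1) := by
    have h := Subgroup.card_mul_index ψ.ker
    rw [hindex, hcardG] at h
    exact Nat.eq_of_mul_eq_mul_right ht0 h
  have hndvd : ¬ p ∣ ψ.ker.index := by
    rw [hindex]; exact (hp.coprime_iff_not_dvd).1 hcop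
  have huniq : ∀ P : Sylow p G, (P : Subgroup G) = ψ.ker := by
    intro P
    have : Unique (Sylow p G) :=
      Sylow.unique_of_normal (hker.toSylow hndvd) (inferInstanceAs ψ.ker.Normal)
    rw [Subsingleton.elim P (hker.toSylow hndvd)]
    rfl
  refine ⟨fun P P' => Sylow.ext ((huniq P).trans (huniq P').symm), fun P => ?_⟩
  rw [huniq P]
  exact ⟨inferInstance, hcardK⟩
end

section
/- Let p be an odd prime, q a prime power and l a positive integer with gcd(p,l) = 1 and gcd(p,q) = 1, and set n = p^r * l. Let C and C' be quasi-cyclic codes of order l and length n over F_q, and let P be a Sylow p-subgroup of Per(C) with T^l ∈ P. Then C and C' are equivalent (i.e. C' = σ • C for some permutation σ of ZMod n) if and only if there exists γ ∈ H'(P) with C' = γ • C. -/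
/-!
If `C' = σ • C`, then `σ⁻¹ * T^l * σ` lies in `Per C`, because `T^l` stabilizes `σ • C`, and it
has `p`-power order, being conjugate to the element `T^l` of the `p`-group `P`. By Sylow's theorems
some `g ∈ Per C` conjugates it into `P` (`exists_conj_mem_sylow`). Since `g` fixes `C`, the
permutation `γ = σ * g` still maps `C` to `C'`, and `γ⁻¹ * T^l * γ ∈ P`.
-/

open Pointwise

/-- In a finite group, every element of `p`-power order is conjugate to an element of any given
Sylow `p`-subgroup. -/
theorem exists_conj_mem_sylow {G : Type*} [Group G] [Finite G] {p : ℕ} [Fact p.Prime]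
    (P : Sylow p G) (x : G) (k : ℕ) (hx : x ^ p ^ k = 1) : ∃ g : G, g⁻¹ * x * g ∈ P := by
  have hpg : IsPGroup p (Subgroup.zpowers x) := by
    rintro ⟨y, m, rfl⟩
    refine ⟨k, Subtype.ext ?_⟩
    change (x ^ m) ^ p ^ k = 1
    rw [← zpow_natCast, zpow_comm, zpow_natCast, hx, one_zpow]
  obtain ⟨Q, hQ⟩ := hpg.exists_le_sylow
  obtain ⟨g, hg⟩ := MulAction.exists_smul_eq G P Q
  refine ⟨g, ?_⟩
  have h : x ∈ g • P := hg ▸ hQ (Subgroup.mem_zpowers x)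
  rw [← SetLike.mem_coe, Sylow.coe_smul, Set.mem_smul_set_iff_inv_smul_mem] at h
  simpa [MulAut.smul_def] using h

/-- let `p` be an odd prime, `q` a prime power, `l ≥ 1` with
`gcd(p, l) = gcd(p, q) = 1`, and `n = p^r * l`.  Let `C`, `C'` be quasi-cyclic codes of
order `l` and length `n` over `F_q` and `P` a Sylow `p`-subgroup of `Per(C)` with
`T^l ∈ P`.  Then `C` and `C'` are equivalent if and only if they are equivalent by an
element of `H'(P) = {σ | σ⁻¹ * T^l * σ ∈ P}`. -/
theorem quasiCyclic_equivalent_iff_HP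
    (p : ℕ) (hp : p.Prime) (hodd : Odd p) (r l : ℕ) (hl : 1 ≤ l)
    (hpl : Nat.Coprime p l)
    (q : ℕ) (hq : IsPrimePow q) (hpq : Nat.Coprime p q)
    (F : Type) [Field F] [Fintype F] (hF : Fintype.card F = q)
    (C C' : Submodule F (ZMod (p ^ r * l) → F))
    (hC : shiftT (p ^ r * l) ^ l ∈ Per C) (hC' : shiftT (p ^ r * l) ^ l ∈ Per C')
    (P : Sylow p ↥(Per C))
    (hT : shiftT (p ^ r * l) ^ l ∈ (P : Subgroup ↥(Per C)).map (Per C).subtype) :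
    (∃ σ : Equiv.Perm (ZMod (p ^ r * l)), C' = σ • C) ↔
      ∃ γ : Equiv.Perm (ZMod (p ^ r * l)),
        γ ∈ {σ : Equiv.Perm (ZMod (p ^ r * l)) |
          σ⁻¹ * shiftT (p ^ r * l) ^ l * σ ∈ (P : Subgroup ↥(Per C)).map (Per C).subtype} ∧
        C' = γ • C := by
  constructor
  · rintro ⟨σ, rfl⟩
    have : Fact p.Prime := ⟨hp⟩
    have : NeZero (p ^ r * l) := ⟨(Nat.mul_pos (pow_pos hp.pos r) hl).ne'⟩
    generalize shiftT (p ^ r * l) ^ l = t at hC hC' hT ⊢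
    have hmem : σ⁻¹ * t * σ ∈ Per C := by
      have h : t • σ • C = σ • C := hC'
      change (σ⁻¹ * t * σ) • C = C
      rw [mul_smul, mul_smul, h, inv_smul_smul]
    obtain ⟨k, hk⟩ : ∃ k : ℕ, t ^ p ^ k = 1 := by
      obtain ⟨y, hy, rfl⟩ := hT
      obtain ⟨k, hk⟩ := P.isPGroup' ⟨y, hy⟩
      exact ⟨k, congrArg (fun z => ((z : Per C) : Equiv.Perm (ZMod (p ^ r * l))))
        (congrArg Subtype.val hk)⟩
    have hpow : (⟨σ⁻¹ * t * σ, hmem⟩ : Per C) ^ p ^ k = 1 := by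
      apply Subtype.ext
      have h := conj_pow (i := p ^ k) (a := σ⁻¹) (b := t)
      rw [inv_inv, hk, mul_one, inv_mul_cancel] at h
      exact h
    obtain ⟨g, hg⟩ := exists_conj_mem_sylow P _ k hpow
    refine ⟨σ * g, ⟨_, hg, ?_⟩, ?_⟩
    · change (g : Equiv.Perm (ZMod (p ^ r * l)))⁻¹ * (σ⁻¹ * t * σ) * g = _
      group
    · have h : (g : Equiv.Perm (ZMod (p ^ r * l))) • C = C := g.2
      rw [mul_smul, h]
  · rintro ⟨γ, -, h⟩
    exact ⟨γ, h⟩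
end

section
/- Let p be an odd prime, q a prime power, l a positive integer with gcd(p,l) = 1, n = p^r * l, and C a quasi-cyclic code of order l and length n over F_q. Let P be a Sylow p-subgroup of Per(C) with T^l ∈ P. Then the affine group AG(n), consisting of the permutations x ↦ a*x + b of ZMod n with a a unit, is contained in H'(P). -/
/-!
Conjugating a translation by an affine permutation `σ : x ↦ a * x + b` gives a translation:
`σ⁻¹ * T ^ l * σ` is `x ↦ x + a⁻¹ * l`. As `ZMod (p ^ r * l)` is finite, `a⁻¹` is the class of a
natural number `k`, so this permutation is `(T ^ l) ^ k`. It therefore lies in every subgroup that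
contains `T ^ l`, in particular in `P`.
-/

open Pointwise

theorem shiftT_pow_apply (n k : ℕ) (x : ZMod n) : (shiftT n ^ k) x = x + k := by
  induction k with
  | zero => simp
  | succ k ih =>
    rw [pow_succ', Equiv.Perm.mul_apply, ih]
    simp [shiftT, add_assoc]

/-- let `p` be an odd prime, `q` a prime power, `l ≥ 1` with
`gcd(p, l) = 1`, `n = p^r * l`, and `C` a quasi-cyclic code of order `l` and length `n`
over `F_q`.  If `P` is a Sylow `p`-subgroup of `Per(C)` with `T^l ∈ P`, then the affine
group `AG(n)` of permutations `x ↦ a * x + b` with `a` a unit is contained in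
`H'(P) = {σ | σ⁻¹ * T^l * σ ∈ P}`. -/
theorem affineGroup_subset_HP_quasiCyclic
    (p : ℕ) (hp : p.Prime) (hodd : Odd p) (r l : ℕ) (hl : 1 ≤ l)
    (hpl : Nat.Coprime p l)
    (q : ℕ) (hq : IsPrimePow q)
    (F : Type) [Field F] [Fintype F] (hF : Fintype.card F = q)
    (C : Submodule F (ZMod (p ^ r * l) → F))
    (hC : shiftT (p ^ r * l) ^ l ∈ Per C)
    (P : Sylow p ↥(Per C))
    (hT : shiftT (p ^ r * l) ^ l ∈ (P : Subgroup ↥(Per C)).map (Per C).subtype) :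
    {σ : Equiv.Perm (ZMod (p ^ r * l)) | ∃ a : (ZMod (p ^ r * l))ˣ,
        ∃ b : ZMod (p ^ r * l), ∀ x : ZMod (p ^ r * l), σ x = (a : ZMod (p ^ r * l)) * x + b} ⊆
      {σ : Equiv.Perm (ZMod (p ^ r * l)) |
        σ⁻¹ * shiftT (p ^ r * l) ^ l * σ ∈ (P : Subgroup ↥(Per C)).map (Per C).subtype} := by
  rintro σ ⟨a, b, hσ⟩
  have : NeZero (p ^ r * l) := ⟨mul_ne_zero (pow_ne_zero r hp.ne_zero) (by omega)⟩
  have key : σ⁻¹ * shiftT (p ^ r * l) ^ l * σ =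
      (shiftT (p ^ r * l) ^ l) ^ (↑a⁻¹ : ZMod (p ^ r * l)).val := by
    rw [mul_assoc, inv_mul_eq_iff_eq_mul]
    ext1 x
    rw [Equiv.Perm.mul_apply, Equiv.Perm.mul_apply, ← pow_mul, shiftT_pow_apply, shiftT_pow_apply,
      hσ, hσ, Nat.cast_mul, ZMod.natCast_zmod_val]
    linear_combination (-(l : ZMod (p ^ r * l))) * a.mul_inv
  rw [Set.mem_ofPred_eq, key]
  exact pow_mem hT _
end

section
/- Let p be an odd prime, q a prime power, l ≥ 2 with gcd(p,l) = 1, n = p^r * l, and C a quasi-cyclic code of order l and length n over F_q. Let P be a Sylow p-subgroup of Per(C) with T^l ∈ P, and suppose G is a subgroup of Equiv.Perm (ZMod n) whose underlying set equals H'(P). If n is even, then either the action of G on ZMod n is not preprimitive, or G is the full symmetric group. If n is odd, then either the action of G on ZMod n is not preprimitive, or G equals the alternating group of ZMod n, or G is the full symmetric group. -/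
/-!
Write `t = T ^ l`. If `r = 0` then `t = 1`, so the set `H'(P)` is everything and `G = ⊤`.

If `r ≥ 1` then `t ≠ 1`, and `G` is never primitive. Indeed every `G`-conjugate of `t` lies
in the `p`-group `P`, so the normal closure `N` of `t` in `G` is a nontrivial normal `p`-subgroup
of `G`. A nontrivial normal subgroup of a primitive permutation group is transitive, so
`n = p ^ r * l` would be the size of an orbit of a `p`-group, hence a power of `p`; this contradicts
`l ≥ 2` and `gcd(p, l) = 1`.
-/

open Pointwise

/-- A group action is preprimitive if it is pretransitive and every block is trivial. -/
def IsPreprimitive (G X : Type*) [Group G] [MulAction G X] : Prop :=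
  MulAction.IsPretransitive G X ∧
    ∀ B : Set X, MulAction.IsBlock G B → MulAction.IsTrivialBlock B

/-- If all conjugates `σ⁻¹ t σ` of some `t ≠ 1`, `t ∈ G`, by elements of a primitive group `G` lie
in a `p`-group `Q`, then the normal closure of `t` in `G` is a transitive `p`-group, so the degree
is a power of `p`. -/
theorem exists_card_eq_pow_of_isPreprimitive {X : Type*} [Finite X] [Nonempty X] {p : ℕ}
    (hp : p.Prime) {t : Equiv.Perm X} (ht : t ≠ 1) {Q G : Subgroup (Equiv.Perm X)}
    (hQ : IsPGroup p Q) (htG : t ∈ G) (hG : ∀ σ ∈ G, σ⁻¹ * t * σ ∈ Q)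
    (h : IsPreprimitive G X) : ∃ k : ℕ, Nat.card X = p ^ k := by
  have := Fact.mk hp
  have : MulAction.IsPretransitive G X := h.1
  have : MulAction.IsPreprimitive G X := { isTrivialBlock_of_isBlock := fun hB => h.2 _ hB }
  let N : Subgroup G := Subgroup.normalClosure {⟨t, htG⟩}
  have hNQ : N ≤ Q.subgroupOf G := by
    refine (Subgroup.closure_le _).2 fun x hx => ?_
    obtain ⟨a, rfl, hc⟩ := Group.mem_conjugatesOfSet_iff.1 hx
    obtain ⟨c, rfl⟩ := isConj_iff.1 hc
    simpa [Subgroup.mem_subgroupOf] using hG _ (G.inv_mem c.2)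
  have hN : IsPGroup p N :=
    (hQ.comap_of_injective G.subtype G.subtype_injective).to_le hNQ
  have htN : (⟨t, htG⟩ : G) ∈ N := Subgroup.subset_normalClosure rfl
  have hfix : MulAction.fixedPoints N X ≠ Set.univ := fun hf =>
    ht <| Equiv.ext fun x => (hf.symm ▸ Set.mem_univ x : x ∈ MulAction.fixedPoints N X) ⟨_, htN⟩
  have : MulAction.IsPretransitive N X :=
    MulAction.IsQuasiPreprimitive.isPretransitive_of_normal hfix
  obtain ⟨x⟩ := ‹Nonempty X›
  obtain ⟨k, hk⟩ := hN.card_orbit x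
  refine ⟨k, ?_⟩
  rw [← hk, MulAction.orbit_eq_univ, Nat.card_congr (Equiv.Set.univ X)]

/-- let `p` be an odd prime, `q` a prime power, `l ≥ 2` with
`gcd(p, l) = 1`, `n = p^r * l`, and `C` a quasi-cyclic code of order `l` and length `n`
over `F_q`.  Let `P` be a Sylow `p`-subgroup of `Per(C)` with `T^l ∈ P` and `G` a subgroup
of `Equiv.Perm (ZMod n)` whose underlying set is `H'(P)`.  If `n` is even, then `G` is not
preprimitive or `G` is the full symmetric group; if `n` is odd, then `G` is not
preprimitive, or `G` is the alternating group, or `G` is the full symmetric group. -/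
theorem HP_imprimitive_or_alternating_or_symmetric
    (p : ℕ) (hp : p.Prime) (hodd : Odd p) (r l : ℕ) (hl : 2 ≤ l)
    (hpl : Nat.Coprime p l) [NeZero (p ^ r * l)]
    (q : ℕ) (hq : IsPrimePow q)
    (F : Type) [Field F] [Fintype F] (hF : Fintype.card F = q)
    (C : Submodule F (ZMod (p ^ r * l) → F))
    (hC : shiftT (p ^ r * l) ^ l ∈ Per C)
    (P : Sylow p ↥(Per C))
    (hT : shiftT (p ^ r * l) ^ l ∈ (P : Subgroup ↥(Per C)).map (Per C).subtype)
    (G : Subgroup (Equiv.Perm (ZMod (p ^ r * l))))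
    (hG : (G : Set (Equiv.Perm (ZMod (p ^ r * l)))) =
      {σ : Equiv.Perm (ZMod (p ^ r * l)) |
        σ⁻¹ * shiftT (p ^ r * l) ^ l * σ ∈ (P : Subgroup ↥(Per C)).map (Per C).subtype}) :
    (Even (p ^ r * l) →
      ¬ IsPreprimitive ↥G (ZMod (p ^ r * l)) ∨ G = ⊤) ∧
    (Odd (p ^ r * l) →
      ¬ IsPreprimitive ↥G (ZMod (p ^ r * l)) ∨
        G = alternatingGroup (ZMod (p ^ r * l)) ∨ G = ⊤) := by
  suffices H : ¬ IsPreprimitive ↥G (ZMod (p ^ r * l)) ∨ G = ⊤ from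
    ⟨fun _ => H, fun _ => H.imp_right Or.inr⟩
  have hmem : ∀ σ, σ ∈ G ↔
      σ⁻¹ * shiftT (p ^ r * l) ^ l * σ ∈ (P : Subgroup ↥(Per C)).map (Per C).subtype :=
    fun σ => Set.ext_iff.1 hG σ
  rcases Nat.eq_zero_or_pos r with rfl | hr
  · right
    have h1 : shiftT (p ^ 0 * l) ^ l = 1 := by
      ext1 x
      have hl0 : (l : ZMod (p ^ 0 * l)) = 0 := (ZMod.natCast_eq_zero_iff _ _).2 (by simp)
      rw [shiftT_pow_apply, hl0, add_zero, Equiv.Perm.one_apply]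
    refine (Subgroup.eq_top_iff' G).2 fun σ => (hmem σ).2 ?_
    rw [h1, mul_one, inv_mul_cancel]
    exact one_mem _
  · left
    intro h
    have h1 : shiftT (p ^ r * l) ^ l ≠ 1 := by
      intro h1
      have h0 := congrArg (fun σ => σ 0) h1
      simp only [shiftT_pow_apply, zero_add, Equiv.Perm.one_apply] at h0
      have hle := Nat.le_of_dvd (by omega) ((ZMod.natCast_eq_zero_iff _ _).1 h0)
      have := Nat.one_lt_pow hr.ne' hp.one_lt
      nlinarith
    obtain ⟨k, hk⟩ := exists_card_eq_pow_of_isPreprimitive hp h1 (P.isPGroup'.map _)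
      ((hmem _).2 (by simpa using hT)) (fun σ hσ => (hmem σ).1 hσ) h
    rw [Nat.card_zmod] at hk
    have hcop : Nat.Coprime l (p ^ k) := (hpl.pow_left k).symm
    have := hcop.eq_one_of_dvd (hk ▸ Dvd.intro_left _ rfl)
    omega
end

section
/- Let p ≥ 5 be a prime, r ≥ 2, and let C be a cyclic code of length p^r over the field F_p with p elements. If C is not an elementary code (i.e. C is not the zero code, not the full space, not the repetition code, and not the dual of the repetition code), then the action of Per(C) on ZMod p^r is not preprimitive (Per(C) is imprimitive). -/
/-!
Since `x ^ (p ^ r) - 1 = (x - 1) ^ (p ^ r)` over `F_p`, the shift-invariant codes form a chain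
(`le_total_of_shift`). Hence, with `C⊥` the orthogonal code for the dot product, the smaller `D`
of `C` and `C⊥` is self-orthogonal; it is invariant under `Per C`, and it contains a nonconstant
word because `C` is not elementary.

Put `m = p ^ (r - 1)` and let `E` be the code of words that are periodic modulo `m`. If `D ≤ E`, then
`S = D` is a `Per C`-invariant set of `m`-periodic words. Otherwise `E ≤ D`, and we take for `S`
the set of words `f` such that `φ ∘ f ∈ D` for every `φ : F_p → F_p`. This is again invariant and
contains `E`, and its members are `m`-periodic: for `f ∈ S` and a residue class `K` modulo `m`,
the indicator of `K` lies in `E ≤ D`, as does the indicator of each fibre of `f`, so by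
self-orthogonality `f` takes each value on `K` a multiple of `p` times; as `K` has `p` elements,
`f` is constant on it.

In both cases the points not separated from `0` by `S` form a block: it contains `m ≠ 0`, and it is
not everything because `S` contains a nonconstant word.
-/

open Pointwise

section Preamble

variable {F : Type} [Field F] {n : ℕ}

/-- The dual of the repetition code: the codewords whose coordinates sum to zero. -/
def sumZeroCode (F : Type) [Field F] (n : ℕ) [NeZero n] : Submodule F (ZMod n → F) where
  carrier := {x | ∑ i : ZMod n, x i = 0}
  add_mem' := by
    intro a b ha hb
    simp only [Set.mem_setOf_eq, Pi.add_apply, Finset.sum_add_distrib] at *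
    rw [ha, hb, add_zero]
  zero_mem' := by simp
  smul_mem' := by
    intro c x hx
    simp only [Set.mem_setOf_eq, Pi.smul_apply, smul_eq_mul, ← Finset.mul_sum] at *
    rw [hx, mul_zero]

end Preamble

namespace CyclicPer

variable {p : ℕ} [hp : Fact p.Prime] {r : ℕ}

/-! ### Permutations acting on words -/

lemma comp_mem {n : ℕ} {C : Submodule (ZMod p) (ZMod n → ZMod p)} {σ : Equiv.Perm (ZMod n)}
    (hσ : σ ∈ Per C) {f : ZMod n → ZMod p} (hf : f ∈ C) : (fun x => f (σ x)) ∈ C := by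
  have h : σ⁻¹ • C = C := (Per C).inv_mem hσ
  rw [← h]
  exact Submodule.smul_mem_pointwise_smul f σ⁻¹ C hf

/-- A `P`-invariant family of words which separates some point from `0`, but does not separate
`a ≠ 0` from `0`, yields the nontrivial block of points not separated from `0`. -/
lemma not_preprimitive_of_family {n : ℕ} (P : Subgroup (Equiv.Perm (ZMod n)))
    (S : Set (ZMod n → ZMod p))
    (hS : ∀ σ ∈ P, ∀ f ∈ S, (fun x => f (σ x)) ∈ S)
    (a : ZMod n) (ha : a ≠ 0) (haS : ∀ f ∈ S, f a = f 0)
    (hne : ∃ f ∈ S, ∃ x, f x ≠ f 0) : ¬ IsPreprimitive ↥P (ZMod n) := by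
  rintro ⟨-, hB⟩
  have hblock : MulAction.IsBlock ↥P {x : ZMod n | ∀ f ∈ S, f x = f 0} := by
    have key : ∀ (σ : Equiv.Perm (ZMod n)), σ ∈ P → ∀ b, (∀ f ∈ S, f b = f 0) →
        (∀ f ∈ S, f (σ b) = f 0) → ∀ x, (∀ f ∈ S, f x = f 0) → ∀ f ∈ S, f (σ x) = f 0 := by
      intro σ hσ b hb hσb x hx f hf
      have h1 := hx _ (hS σ hσ f hf)
      have h2 := hb _ (hS σ hσ f hf)
      exact h1.trans (h2.symm.trans (hσb f hf))
    rw [MulAction.isBlock_iff_smul_eq_of_mem]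
    rintro ⟨σ, hσ⟩ b hb hσb
    ext y
    rw [Set.mem_smul_set_iff_inv_smul_mem]
    constructor
    · intro hy f hf
      have := key σ hσ b hb hσb (σ⁻¹ y) hy f hf
      simpa using this
    · intro hy
      refine key σ⁻¹ (P.inv_mem hσ) (σ b) hσb ?_ y hy
      intro f hf
      simpa using hb f hf
  obtain ⟨f, hf, x, hx⟩ := hne
  rcases hB _ hblock with h | h
  · exact ha (h (fun f hf => haS f hf) (fun f _ => rfl))
  · have : x ∈ {x : ZMod n | ∀ f ∈ S, f x = f 0} := by rw [h]; trivial
    exact hx (this f hf)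

/-! ### The chain of cyclic codes -/

/-- Precomposition with the shift, as a linear map. -/
def shiftMap (p n : ℕ) : (ZMod n → ZMod p) →ₗ[ZMod p] (ZMod n → ZMod p) :=
  LinearMap.funLeft (ZMod p) (ZMod p) (fun x => x + 1)

lemma shiftMap_pow (p n k : ℕ) (f : ZMod n → ZMod p) (x : ZMod n) :
    (shiftMap p n ^ k) f x = f (x + k) := by
  induction k generalizing f with
  | zero => simp
  | succ k ih =>
    rw [pow_succ, Module.End.mul_apply, ih]
    simp [shiftMap, LinearMap.funLeft_apply, add_assoc]

/-- The difference operator `f ↦ f (· + 1) - f`, i.e. multiplication by `x - 1` in the polynomial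
description of cyclic codes (up to reversal of the coordinates). -/
def diffMap (p n : ℕ) : Module.End (ZMod p) (ZMod n → ZMod p) := shiftMap p n - 1

lemma diffMap_pow_eq_zero : diffMap p (p ^ r) ^ (p ^ r) = 0 := by
  have : CharP (Module.End (ZMod p) (ZMod (p ^ r) → ZMod p)) p :=
    charP_of_injective_algebraMap
      (FaithfulSMul.algebraMap_injective (ZMod p) (Module.End (ZMod p) (ZMod (p ^ r) → ZMod p))) p
  rw [diffMap, sub_pow_char_pow_of_commute _ _ (Commute.one_right _), one_pow, sub_eq_zero]
  refine LinearMap.ext fun f => funext fun x => ?_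
  rw [shiftMap_pow, Module.End.one_apply, ZMod.natCast_self, add_zero]

lemma eq_of_diffMap_eq_zero {f : ZMod (p ^ r) → ZMod p} (h : diffMap p (p ^ r) f = 0)
    (x : ZMod (p ^ r)) : f x = f 0 := by
  have h1 : shiftMap p (p ^ r) f = f := by
    simpa [diffMap, sub_eq_zero] using h
  have h2 : ∀ k : ℕ, (shiftMap p (p ^ r) ^ k) f = f := by
    intro k
    induction k with
    | zero => simp
    | succ k ih => rw [pow_succ, Module.End.mul_apply, h1, ih]
  have := congrFun (h2 x.val) 0
  rw [shiftMap_pow] at this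
  simpa using this

/-- An invariant code containing a word killed by exactly the `(k + 1)`-st power of the difference
operator contains the whole kernel of that power, because the kernel of the difference operator
itself is the line of constant words. -/
lemma ker_le {A : Submodule (ZMod p) (ZMod (p ^ r) → ZMod p)}
    (hA : ∀ f ∈ A, diffMap p (p ^ r) f ∈ A) {f : ZMod (p ^ r) → ZMod p} (hf : f ∈ A) {k : ℕ}
    (hk : (diffMap p (p ^ r) ^ k) f ≠ 0) (hk1 : (diffMap p (p ^ r) ^ (k + 1)) f = 0) :
    ∀ h, (diffMap p (p ^ r) ^ (k + 1)) h = 0 → h ∈ A := by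
  have hpow : ∀ j, (diffMap p (p ^ r) ^ j) f ∈ A := by
    intro j
    induction j with
    | zero => simpa
    | succ j ih => rw [pow_succ', Module.End.mul_apply]; exact hA _ ih
  have hconst : ∀ g : ZMod (p ^ r) → ZMod p, ∀ j, (diffMap p (p ^ r) ^ (j + 1)) g = 0 →
      ∀ x, (diffMap p (p ^ r) ^ j) g x = (diffMap p (p ^ r) ^ j) g 0 := by
    intro g j hg
    apply eq_of_diffMap_eq_zero
    rwa [pow_succ', Module.End.mul_apply] at hg
  have hc : (diffMap p (p ^ r) ^ k) f 0 ≠ 0 := by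
    intro h0
    apply hk
    funext x
    rw [hconst f k hk1 x, h0]; rfl
  have main : ∀ j, j ≤ k + 1 → ∀ h, (diffMap p (p ^ r) ^ j) h = 0 → h ∈ A := by
    intro j
    induction j with
    | zero => intro _ h hh; simp at hh; rw [hh]; exact A.zero_mem
    | succ j ih =>
      intro hj h hh
      set c : ZMod p := (diffMap p (p ^ r) ^ j) h 0 / (diffMap p (p ^ r) ^ k) f 0 with hcdef
      have hmem : c • (diffMap p (p ^ r) ^ (k - j)) f ∈ A := A.smul_mem _ (hpow _)
      have hsub : h - c • (diffMap p (p ^ r) ^ (k - j)) f ∈ A := by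
        apply ih (by omega)
        rw [map_sub, map_smul, ← Module.End.mul_apply, ← pow_add, show j + (k - j) = k by omega]
        funext x
        simp only [Pi.sub_apply, Pi.smul_apply, Pi.zero_apply, smul_eq_mul]
        rw [hconst h j hh x, hconst f k hk1 x, hcdef, div_mul_cancel₀ _ hc, sub_self]
      simpa using A.add_mem hsub hmem
  exact main (k + 1) le_rfl

lemma exists_order {f : ZMod (p ^ r) → ZMod p} (hf : f ≠ 0) :
    ∃ k, (diffMap p (p ^ r) ^ k) f ≠ 0 ∧ (diffMap p (p ^ r) ^ (k + 1)) f = 0 := by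
  classical
  have hex : ∃ k, (diffMap p (p ^ r) ^ k) f = 0 := ⟨p ^ r, by rw [diffMap_pow_eq_zero]; rfl⟩
  rcases hn : Nat.find hex with _ | k
  · have := Nat.find_spec hex
    rw [hn] at this
    simp at this
    exact absurd this hf
  · refine ⟨k, Nat.find_min hex (by omega), ?_⟩
    rw [← hn]; exact Nat.find_spec hex

lemma le_total_of_shift {A B : Submodule (ZMod p) (ZMod (p ^ r) → ZMod p)}
    (hA : ∀ f ∈ A, (fun x => f (x + 1)) ∈ A) (hB : ∀ f ∈ B, (fun x => f (x + 1)) ∈ B) :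
    A ≤ B ∨ B ≤ A := by
  have hA' : ∀ f ∈ A, diffMap p (p ^ r) f ∈ A := fun f hf => A.sub_mem (hA f hf) hf
  have hB' : ∀ f ∈ B, diffMap p (p ^ r) f ∈ B := fun f hf => B.sub_mem (hB f hf) hf
  by_contra! hcon
  obtain ⟨f, hfA, hfB⟩ := SetLike.not_le_iff_exists.1 hcon.1
  obtain ⟨g, hgB, hgA⟩ := SetLike.not_le_iff_exists.1 hcon.2
  obtain ⟨k, hk, hk1⟩ := exists_order (f := f) (by rintro rfl; exact hfB B.zero_mem)
  obtain ⟨l, hl, hl1⟩ := exists_order (f := g) (by rintro rfl; exact hgA A.zero_mem)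
  rcases le_total k l with h | h
  · apply hfB
    apply ker_le hB' hgB hl hl1
    rw [show l + 1 = (l - k) + (k + 1) by omega, pow_add, Module.End.mul_apply, hk1, map_zero]
  · apply hgA
    apply ker_le hA' hfA hk hk1
    rw [show k + 1 = (k - l) + (l + 1) by omega, pow_add, Module.End.mul_apply, hl1, map_zero]

/-! ### The orthogonal code -/

/-- The dot product as a bilinear form on words. -/
def dot (p r : ℕ) [Fact p.Prime] : LinearMap.BilinForm (ZMod p) (ZMod (p ^ r) → ZMod p) :=
  dotProductBilin (ZMod p) (ZMod p)

lemma dot_apply (f g : ZMod (p ^ r) → ZMod p) : dot p r f g = ∑ x, f x * g x := rfl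

lemma dot_isRefl : (dot p r).IsRefl := by
  intro f g h
  rw [dot_apply] at h ⊢
  simpa [mul_comm] using h

lemma dot_nondegenerate : (dot p r).Nondegenerate := by
  refine (LinearMap.IsRefl.nondegenerate_iff_separatingLeft (B := dot p r) dot_isRefl).2 ?_
  intro f hf
  exact dotProduct_eq_zero f hf

lemma mem_dual {C : Submodule (ZMod p) (ZMod (p ^ r) → ZMod p)} {g : ZMod (p ^ r) → ZMod p} :
    g ∈ (dot p r).orthogonal C ↔ ∀ f ∈ C, ∑ x, f x * g x = 0 := Iff.rfl

lemma comp_mem_dual {C : Submodule (ZMod p) (ZMod (p ^ r) → ZMod p)}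
    {σ : Equiv.Perm (ZMod (p ^ r))} (hσ : σ ∈ Per C) {g : ZMod (p ^ r) → ZMod p}
    (hg : g ∈ (dot p r).orthogonal C) : (fun x => g (σ x)) ∈ (dot p r).orthogonal C := by
  rw [mem_dual] at hg ⊢
  intro f hf
  have h := hg _ (comp_mem ((Per C).inv_mem hσ) hf)
  rw [← Equiv.sum_comp σ] at h
  simpa using h

/-! ### Nonconstant words -/

lemma exists_nonconst {C : Submodule (ZMod p) (ZMod (p ^ r) → ZMod p)} (h0 : C ≠ ⊥)
    (h2 : C ≠ Submodule.span (ZMod p) {(1 : ZMod (p ^ r) → ZMod p)}) :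
    ∃ f ∈ C, ∃ x, f x ≠ f 0 := by
  by_contra! hcon
  have hform : ∀ f ∈ C, f = f 0 • (1 : ZMod (p ^ r) → ZMod p) := by
    intro f hf
    funext x
    simp [hcon f hf x]
  apply h2
  apply le_antisymm
  · intro f hf
    rw [hform f hf]
    exact Submodule.smul_mem _ _ (Submodule.mem_span_singleton_self _)
  · obtain ⟨f, hf, hf0⟩ := C.exists_mem_ne_zero_of_ne_bot h0
    have hc : f 0 ≠ 0 := by
      intro hc
      apply hf0
      rw [hform f hf, hc, zero_smul]
    rw [Submodule.span_singleton_le_iff_mem]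
    have h := C.smul_mem (f 0)⁻¹ hf
    rw [hform f hf] at h
    simpa [smul_smul, hc] using h

lemma exists_nonconst_dual {C : Submodule (ZMod p) (ZMod (p ^ r) → ZMod p)} (h1 : C ≠ ⊤)
    (h3 : C ≠ sumZeroCode (ZMod p) (p ^ r)) :
    ∃ f ∈ (dot p r).orthogonal C, ∃ x, f x ≠ f 0 := by
  by_contra! hcon
  have hle : sumZeroCode (ZMod p) (p ^ r) ≤ C := by
    rw [← LinearMap.BilinForm.orthogonal_orthogonal dot_nondegenerate dot_isRefl C]
    intro g hg
    rw [mem_dual]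
    intro f hf
    have hg' : ∑ x, g x = 0 := hg
    simp only [hcon f hf, ← Finset.mul_sum, hg', mul_zero]
  -- The sum-zero code is a hyperplane, so a word of `C` of nonzero sum `s` forces `C = ⊤`.
  obtain ⟨f, hf, hfs⟩ : ∃ f ∈ C, ∑ x, f x ≠ 0 := by
    by_contra! h
    exact h3 (le_antisymm h hle)
  apply h1
  rw [eq_top_iff]
  intro g _
  have hmem : g - ((∑ x, g x) / ∑ x, f x) • f ∈ sumZeroCode (ZMod p) (p ^ r) := by
    change ∑ x, (g - ((∑ x, g x) / ∑ x, f x) • f) x = 0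
    simp only [Pi.sub_apply, Pi.smul_apply, smul_eq_mul, Finset.sum_sub_distrib,
      ← Finset.mul_sum]
    rw [div_mul_cancel₀ _ hfs, sub_self]
  simpa using C.add_mem (hle hmem) (C.smul_mem ((∑ x, g x) / ∑ x, f x) hf)

/-! ### Periodic words -/

/-- Reduction modulo `p ^ (r - 1)`. -/
def red (p r : ℕ) : ZMod (p ^ r) →+* ZMod (p ^ (r - 1)) :=
  ZMod.castHom (pow_dvd_pow p (Nat.sub_le r 1)) _

/-- The code of words that are periodic modulo `p ^ (r - 1)`. -/
def periodic (p r : ℕ) : Submodule (ZMod p) (ZMod (p ^ r) → ZMod p) where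
  carrier := {f | ∀ x y, red p r x = red p r y → f x = f y}
  add_mem' := fun hf hg x y h => by simp [hf x y h, hg x y h]
  zero_mem' := fun _ _ _ => rfl
  smul_mem' := fun c f hf x y h => by simp [hf x y h]

lemma mem_periodic {f : ZMod (p ^ r) → ZMod p} :
    f ∈ periodic p r ↔ ∀ x y, red p r x = red p r y → f x = f y := Iff.rfl

lemma card_fiber_le (hr : 1 ≤ r) (x : ZMod (p ^ r)) :
    (Finset.univ.filter fun z => red p r z = red p r x).card ≤ p := by
  classical
  have hsub : (Finset.univ.filter fun z => red p r z = red p r x) ⊆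
      (Finset.range p).image (fun j : ℕ => x + ((j * p ^ (r - 1) : ℕ) : ZMod (p ^ r))) := by
    intro z hz
    simp only [Finset.mem_filter, Finset.mem_univ, true_and] at hz
    have h0 : red p r (z - x) = 0 := by rw [map_sub, hz, sub_self]
    have hv : (z - x) = (((z - x).val : ℕ) : ZMod (p ^ r)) := (ZMod.natCast_zmod_val _).symm
    rw [hv, map_natCast, ZMod.natCast_eq_zero_iff] at h0
    obtain ⟨j, hj⟩ := h0
    have hlt := ZMod.val_lt (z - x)
    have hpr : p ^ r = p ^ (r - 1) * p := by rw [← pow_succ]; congr 1; omega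
    have hjp : j < p := by
      rw [hj] at hlt
      exact Nat.lt_of_mul_lt_mul_left (hlt.trans_le hpr.le)
    simp only [Finset.mem_image, Finset.mem_range]
    refine ⟨j, hjp, ?_⟩
    rw [mul_comm, ← hj, ZMod.natCast_zmod_val]
    abel
  calc _ ≤ _ := Finset.card_le_card hsub
    _ ≤ (Finset.range p).card := Finset.card_image_le
    _ = p := Finset.card_range p

/-- If `D` is self-orthogonal and contains all periodic words, a word all of whose
postcompositions lie in `D` takes each of its values on a residue class a multiple of `p` times,
hence is periodic. -/
lemma mem_periodic_of_comp_mem (hr : 1 ≤ r) {D : Submodule (ZMod p) (ZMod (p ^ r) → ZMod p)}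
    (hper : periodic p r ≤ D) (hself : ∀ f ∈ D, ∀ g ∈ D, ∑ x, f x * g x = 0)
    {f : ZMod (p ^ r) → ZMod p} (hf : ∀ φ : ZMod p → ZMod p, (fun x => φ (f x)) ∈ D) :
    f ∈ periodic p r := by
  classical
  intro x y hxy
  by_contra hne
  have h := hself (fun z => if red p r z = red p r x then 1 else 0)
    (hper (by intro a b hab; simp only [hab])) _ (hf (fun t => if t = f x then 1 else 0))
  simp only [← ite_and, mul_ite, mul_one, mul_zero] at h
  rw [Finset.sum_boole, ZMod.natCast_eq_zero_iff] at h
  have hpos : 0 < (Finset.univ.filter fun z => f z = f x ∧ red p r z = red p r x).card :=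
    Finset.card_pos.2 ⟨x, by simp⟩
  have hlt : (Finset.univ.filter fun z => f z = f x ∧ red p r z = red p r x).card
      < (Finset.univ.filter fun z => red p r z = red p r x).card := by
    apply Finset.card_lt_card
    rw [Finset.ssubset_iff_of_subset (fun z hz => by simp at hz ⊢; exact hz.2)]
    exact ⟨y, by simp [hxy], by simp [Ne.symm hne]⟩
  exact absurd (Nat.le_of_dvd hpos h) (by have := card_fiber_le hr x; omega)

lemma exists_nonconst_periodic (hr : 2 ≤ r) : ∃ f ∈ periodic p r, ∃ x, f x ≠ f 0 := by
  classical
  refine ⟨fun z => if red p r z = 0 then 1 else 0, fun a b hab => by simp only [hab], 1, ?_⟩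
  have : Fact (1 < p ^ (r - 1)) := ⟨Nat.one_lt_pow (by omega) hp.out.one_lt⟩
  simp

/-- For a nonconstant, self-orthogonal cyclic code `D` invariant under a group `P` of permutations,
the points `0` and `p ^ (r - 1)` lie in a common proper block of `P`. -/
lemma not_preprimitive_of_selfOrthogonal (hr : 2 ≤ r)
    (P : Subgroup (Equiv.Perm (ZMod (p ^ r)))) (hT : shiftT (p ^ r) ∈ P)
    (D : Submodule (ZMod p) (ZMod (p ^ r) → ZMod p))
    (hD : ∀ σ ∈ P, ∀ f ∈ D, (fun x => f (σ x)) ∈ D)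
    (hself : ∀ f ∈ D, ∀ g ∈ D, ∑ x, f x * g x = 0)
    (hne : ∃ f ∈ D, ∃ x, f x ≠ f 0) : ¬ IsPreprimitive ↥P (ZMod (p ^ r)) := by
  have ha : ((p ^ (r - 1) : ℕ) : ZMod (p ^ r)) ≠ 0 := by
    rw [Ne, ZMod.natCast_eq_zero_iff]
    intro h
    have := (Nat.pow_dvd_pow_iff_le_right hp.out.one_lt).1 h
    omega
  have hred : red p r ((p ^ (r - 1) : ℕ) : ZMod (p ^ r)) = red p r 0 := by
    rw [map_natCast, ZMod.natCast_self, map_zero]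
  have hE : ∀ f ∈ periodic p r, (fun x => f (x + 1)) ∈ periodic p r := by
    intro f hf x y hxy
    exact hf _ _ (by rw [map_add, map_add, hxy])
  rcases le_total_of_shift (hD _ hT) hE with h | h
  · exact not_preprimitive_of_family P (D : Set _) hD _ ha
      (fun f hf => mem_periodic.1 (h hf) _ _ hred) hne
  · refine not_preprimitive_of_family P {f | ∀ φ : ZMod p → ZMod p, (fun x => φ (f x)) ∈ D}
      (fun σ hσ f hf φ => hD σ hσ _ (hf φ)) _ ha
      (fun f hf => mem_periodic.1 (mem_periodic_of_comp_mem (by omega) h hself hf) _ _ hred) ?_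
    obtain ⟨f, hf, x, hx⟩ := exists_nonconst_periodic (p := p) hr
    refine ⟨f, fun φ => h ?_, x, hx⟩
    intro a b hab
    simp only [mem_periodic.1 hf a b hab]

end CyclicPer

/-- let `p ≥ 5` be a prime, `r ≥ 2`, and `C` a cyclic code of length `p^r`
over the field `F_p = ZMod p`.  If `C` is not elementary (not the zero code, the full
space, the repetition code, or the dual of the repetition code), then the action of
`Per(C)` on `ZMod (p^r)` is not preprimitive, i.e. `Per(C)` is imprimitive. -/
theorem per_not_preprimitive_of_not_elementary
    (p : ℕ) [hp : Fact p.Prime] (hp5 : 5 ≤ p) (r : ℕ) (hr : 2 ≤ r)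
    (C : Submodule (ZMod p) (ZMod (p ^ r) → ZMod p))
    (hC : shiftT (p ^ r) ∈ Per C)
    (h0 : C ≠ ⊥) (h1 : C ≠ ⊤)
    (h2 : C ≠ Submodule.span (ZMod p) {(1 : ZMod (p ^ r) → ZMod p)})
    (h3 : C ≠ sumZeroCode (ZMod p) (p ^ r)) :
    ¬ IsPreprimitive ↥(Per C) (ZMod (p ^ r)) := by
  -- The smaller of `C` and its orthogonal code is self-orthogonal.
  rcases CyclicPer.le_total_of_shift (fun f hf => CyclicPer.comp_mem hC hf)
    (fun f hf => CyclicPer.comp_mem_dual hC hf) with h | h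
  · exact CyclicPer.not_preprimitive_of_selfOrthogonal hr _ hC C
      (fun σ hσ f hf => CyclicPer.comp_mem hσ hf)
      (fun f hf g hg => CyclicPer.mem_dual.1 (h hg) f hf) (CyclicPer.exists_nonconst h0 h2)
  · exact CyclicPer.not_preprimitive_of_selfOrthogonal hr _ hC _
      (fun σ hσ f hf => CyclicPer.comp_mem_dual hσ hf)
      (fun f hf g hg => CyclicPer.mem_dual.1 hg f (h hf))
      (CyclicPer.exists_nonconst_dual h1 h3)
end
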